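/- arXiv:2303.10631 — 4 statements merged into one kernel-verified Lean document; each statement's English description precedes it below -/
import Mathlib

section
/- Let R be an integral domain and Σ an alphabet. Then every trim bideterministic weighted automaton over R and Σ is minimal, i.e., every weighted automaton over R and Σ with the same behaviour has at least as many states. -/
/-- A weighted automaton over a semiring `S` and alphabet `α`:
a finite type of states `Q`, a transition weighting `σ`, an initial
weighting `ι` and a terminal weighting `τ`. -/
structure WeightedAutomaton (S : Type) [Semiring S] (α : Type) : Type 1 where
  Q : Type
  [fintypeQ : Fintype Q]
  σ : Q → α → Q → S
  ι : Q → S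
  τ : Q → S

namespace WeightedAutomaton

attribute [instance] fintypeQ

variable {S : Type} [Semiring S] {α : Type}

/-- The "future" of a state on a word: the sum, over all runs from this state
upon the word, of the product of the transition weights times the terminal
weight of the last state.  (Sequences of states using a zero-weight transition
contribute zero, so this is exactly the sum over runs.) -/
def future (A : WeightedAutomaton S α) : List α → A.Q → S
  | [], q => A.τ q
  | c :: w, q => ∑ p : A.Q, A.σ q c p * A.future w p

/-- The behaviour of a weighted automaton: the series sending each word `w`
to the sum of the monomial weights `ι(q₀)·σ(q₀,c₁,q₁)⋯σ(q_{n−1},cₙ,qₙ)·τ(qₙ)`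
of all runs of the automaton upon `w`. -/
def behaviour (A : WeightedAutomaton S α) (w : List α) : S :=
  ∑ q : A.Q, A.ι q * A.future w q

/-- A weighted automaton is bideterministic if at most one state has nonzero
initial weight, at most one state has nonzero terminal weight, and for every
letter each state has at most one outgoing and at most one incoming transition
with nonzero weight upon that letter. -/
def Bideterministic (A : WeightedAutomaton S α) : Prop :=
  (∀ p q, A.ι p ≠ 0 → A.ι q ≠ 0 → p = q) ∧
  (∀ p q, A.τ p ≠ 0 → A.τ q ≠ 0 → p = q) ∧
  (∀ p c q q', A.σ p c q ≠ 0 → A.σ p c q' ≠ 0 → q = q') ∧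
  (∀ p p' c q, A.σ p c q ≠ 0 → A.σ p' c q ≠ 0 → p = p')

/-- `A.IsPath q l` : starting in state `q`, the list `l` of (letter, next state)
pairs follows transitions all of which have nonzero weight, i.e. it is a run. -/
def IsPath (A : WeightedAutomaton S α) : A.Q → List (α × A.Q) → Prop
  | _, [] => True
  | q, (c, q') :: l => A.σ q c q' ≠ 0 ∧ A.IsPath q' l

/-- The last state of a path. -/
def pathEnd (A : WeightedAutomaton S α) : A.Q → List (α × A.Q) → A.Q
  | q, [] => q
  | _, (_, q') :: l => A.pathEnd q' l

/-- The product of the transition weights along a path. -/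
def pathWeight (A : WeightedAutomaton S α) : A.Q → List (α × A.Q) → S
  | _, [] => 1
  | q, (c, q') :: l => A.σ q c q' * A.pathWeight q' l

/-- A state is accessible if some run from a state with nonzero initial weight
ends in it. -/
def Accessible (A : WeightedAutomaton S α) (q : A.Q) : Prop :=
  ∃ p l, A.ι p ≠ 0 ∧ A.IsPath p l ∧ A.pathEnd p l = q

/-- A state is coaccessible if some run from it ends in a state with nonzero
terminal weight. -/
def Coaccessible (A : WeightedAutomaton S α) (q : A.Q) : Prop :=
  ∃ l, A.IsPath q l ∧ A.τ (A.pathEnd q l) ≠ 0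

/-- A weighted automaton is trim if all its states are accessible and
coaccessible. -/
def Trim (A : WeightedAutomaton S α) : Prop :=
  ∀ q, A.Accessible q ∧ A.Coaccessible q

/-- A weighted automaton is semantically trim if every state lies on some run
whose monomial weight is nonzero. -/
def SemanticallyTrim (A : WeightedAutomaton S α) : Prop :=
  ∀ q, ∃ p l, A.IsPath p l ∧ (q = p ∨ q ∈ l.map Prod.snd) ∧
    A.ι p * A.pathWeight p l * A.τ (A.pathEnd p l) ≠ 0

/-- The number of states of a weighted automaton. -/
def states (A : WeightedAutomaton S α) : ℕ := Fintype.card A.Q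

/-- A weighted automaton is minimal if every weighted automaton over the same
semiring and alphabet with the same behaviour has at least as many states. -/
def Minimal (A : WeightedAutomaton S α) : Prop :=
  ∀ B : WeightedAutomaton S α, B.behaviour = A.behaviour → A.states ≤ B.states

end WeightedAutomaton

/-!
A run to `p` from an initial state is labelled by a word `u p` after which, by determinism, all the
weight sits in `p`; dually, a run from `q` to a terminal state is labelled by a word `v q` that only
`q` gives a nonzero value. So the Hankel matrix `‖A‖ (u p ++ v q)` is diagonal with nonzero diagonal
entries. For every automaton `B` with the same behaviour this matrix factors through `B.Q → S`,
and the strong rank condition bounds its size by the number of states of `B`.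
-/

open Function
open scoped Matrix

section Matrix

variable {m n S : Type*} [Fintype m]

section Support

variable [NonUnitalNonAssocSemiring S] [NoZeroDivisors S]

theorem dotProduct_ne_zero_iff_of_support_left {x : m → S} {p : m}
    (hx : support x = {p}) (y : m → S) : x ⬝ᵥ y ≠ 0 ↔ y p ≠ 0 := by
  have hp : x p ≠ 0 := mem_support.1 (hx ▸ Set.mem_singleton p)
  have hsum : x ⬝ᵥ y = x p * y p := Fintype.sum_eq_single p fun q hq ↦ by
    have hxq : x q = 0 := notMem_support.1 (by rwa [hx])
    rw [hxq, zero_mul]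
  rw [hsum, mul_ne_zero_iff, and_iff_right hp]

theorem dotProduct_ne_zero_iff_of_support_right {y : m → S} {p : m}
    (hy : support y = {p}) (x : m → S) : x ⬝ᵥ y ≠ 0 ↔ x p ≠ 0 := by
  have hp : y p ≠ 0 := mem_support.1 (hy ▸ Set.mem_singleton p)
  have hsum : x ⬝ᵥ y = x p * y p := Fintype.sum_eq_single p fun q hq ↦ by
    have hyq : y q = 0 := notMem_support.1 (by rwa [hy])
    rw [hyq, mul_zero]
  rw [hsum, mul_ne_zero_iff, and_iff_left hp]

theorem support_vecMul_of_support_eq_singleton {x : m → S} {p : m}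
    (hx : support x = {p}) (M : Matrix m n S) : support (x ᵥ* M) = support (M.row p) :=
  Set.ext fun q ↦ dotProduct_ne_zero_iff_of_support_left hx (M.col q)

theorem support_mulVec_of_support_eq_singleton {y : m → S} {q : m}
    (hy : support y = {q}) (M : Matrix n m S) : support (M *ᵥ y) = support (M.col q) :=
  Set.ext fun p ↦ dotProduct_ne_zero_iff_of_support_right hy (M.row p)

end Support

theorem card_le_card_of_mul_eq_diagonal [Semiring S] [IsRightCancelMulZero S]
    [StrongRankCondition S] [Fintype n] [DecidableEq m] {U : Matrix m n S} {V : Matrix n m S}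
    {d : m → S} (hd : ∀ i, d i ≠ 0) (hUV : U * V = Matrix.diagonal d) :
    Fintype.card m ≤ Fintype.card n := by
  refine card_le_of_injective S U.vecMulLinear fun x y hxy ↦ funext fun i ↦ ?_
  have hdiag : x ᵥ* Matrix.diagonal d = y ᵥ* Matrix.diagonal d := by
    simpa only [Matrix.vecMulLinear_apply, Matrix.vecMul_vecMul, hUV] using
      congrArg (· ᵥ* V) hxy
  have hi : x i * d i = y i * d i := by
    simpa only [Matrix.vecMul_diagonal] using congrFun hdiag i
  exact mul_right_cancel₀ (hd i) hi

end Matrix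

namespace WeightedAutomaton

variable {S : Type} [Semiring S] {α : Type} (A : WeightedAutomaton S α)

/-- The matrix of transition weights upon a letter, with rows indexed by source states; it
turns the recursion defining `future` into a matrix-vector product. -/
def transitionMatrix (c : α) : Matrix A.Q A.Q S :=
  Matrix.of fun p q ↦ A.σ p c q

/-- The row vector `x · σ(c₁) ⋯ σ(cₙ)`: the weights in which the states are reached upon `c₁ ⋯ cₙ`
when the states are initially weighted by `x`. For `x = ι` this is the counterpart of `future`;
an arbitrary `x` allows induction on the first letter. -/
def propagate (x : A.Q → S) (w : List α) : A.Q → S :=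
  w.foldl (fun y c ↦ y ᵥ* A.transitionMatrix c) x

/-- The forward half of bideterminism: at most one initial state, and at most one transition upon
each letter out of each state. It makes `propagate` preserve singleton supports along runs. -/
def Deterministic : Prop :=
  (support A.ι).Subsingleton ∧ ∀ p c, (support ((A.transitionMatrix c).row p)).Subsingleton

/-- The backward half of bideterminism: at most one terminal state, and at most one transition upon
each letter into each state. It makes `future` have singleton support on words labelling runs to
the terminal state. -/
def Codeterministic : Prop :=
  (support A.τ).Subsingleton ∧ ∀ c q, (support ((A.transitionMatrix c).col q)).Subsingleton

variable {A}

theorem Bideterministic.deterministic (hA : A.Bideterministic) : A.Deterministic :=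
  ⟨fun p hp q hq ↦ hA.1 p q hp hq, fun p c q hq q' hq' ↦ hA.2.2.1 p c q q' hq hq'⟩

theorem Bideterministic.codeterministic (hA : A.Bideterministic) : A.Codeterministic :=
  ⟨fun p hp q hq ↦ hA.2.1 p q hp hq, fun c q p hp p' hp' ↦ hA.2.2.2 p p' c q hp hp'⟩

variable (A)

theorem future_cons (c : α) (w : List α) :
    A.future (c :: w) = A.transitionMatrix c *ᵥ A.future w :=
  rfl

theorem dotProduct_future_append (x : A.Q → S) (u v : List α) :
    x ⬝ᵥ A.future (u ++ v) = A.propagate x u ⬝ᵥ A.future v := by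
  induction u generalizing x with
  | nil => rfl
  | cons c u ih => rw [List.cons_append, future_cons, Matrix.dotProduct_mulVec, ih]; rfl

theorem behaviour_append (u v : List α) :
    A.behaviour (u ++ v) = A.propagate A.ι u ⬝ᵥ A.future v :=
  A.dotProduct_future_append A.ι u v

theorem card_le_states_of_behaviour_append_ne_zero_iff [IsRightCancelMulZero S]
    [StrongRankCondition S] {κ : Type*} [Fintype κ] {u v : κ → List α}
    (h : ∀ i j, A.behaviour (u i ++ v j) ≠ 0 ↔ i = j) :
    Fintype.card κ ≤ A.states := by
  classical
  let U : Matrix κ A.Q S := Matrix.of fun i ↦ A.propagate A.ι (u i)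
  let V : Matrix A.Q κ S := Matrix.of fun q j ↦ A.future (v j) q
  have hUV : U * V = Matrix.diagonal fun i ↦ A.behaviour (u i ++ v i) := by
    ext i j
    have hmul : (U * V) i j = A.behaviour (u i ++ v j) := (A.behaviour_append _ _).symm
    rcases eq_or_ne i j with rfl | hij
    · rw [hmul, Matrix.diagonal_apply_eq]
    · rw [hmul, Matrix.diagonal_apply_ne _ hij, not_not.1 (mt (h i j).1 hij)]
  exact card_le_card_of_mul_eq_diagonal (fun i ↦ (h i i).2 rfl) hUV

variable {A} [NoZeroDivisors S]

theorem Deterministic.support_propagate (hA : A.Deterministic) {x : A.Q → S} {p : A.Q}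
    (hx : support x = {p}) {l : List (α × A.Q)} (hl : A.IsPath p l) :
    support (A.propagate x (l.map Prod.fst)) = {A.pathEnd p l} := by
  induction l generalizing p x with
  | nil => exact hx
  | cons step l ih =>
    obtain ⟨c, p'⟩ := step
    have hstep : support (x ᵥ* A.transitionMatrix c) = {p'} :=
      (support_vecMul_of_support_eq_singleton hx _).trans ((hA.2 p c).eq_singleton_of_mem hl.1)
    exact ih hstep hl.2

theorem Codeterministic.support_future (hA : A.Codeterministic) {q : A.Q} {l : List (α × A.Q)}
    (hl : A.IsPath q l) (hτ : A.τ (A.pathEnd q l) ≠ 0) :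
    support (A.future (l.map Prod.fst)) = {q} := by
  induction l generalizing q with
  | nil => exact hA.1.eq_singleton_of_mem hτ
  | cons step l ih =>
    obtain ⟨c, q'⟩ := step
    exact (support_mulVec_of_support_eq_singleton (ih hl.2 hτ) _).trans
      ((hA.2 c q').eq_singleton_of_mem hl.1)

theorem Accessible.exists_support_propagate_eq_singleton {p : A.Q} (hp : A.Accessible p)
    (hA : A.Deterministic) : ∃ u, support (A.propagate A.ι u) = {p} := by
  obtain ⟨_, l, hι, hl, rfl⟩ := hp
  exact ⟨l.map Prod.fst, hA.support_propagate (hA.1.eq_singleton_of_mem hι) hl⟩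

theorem Coaccessible.exists_support_future_eq_singleton {q : A.Q} (hq : A.Coaccessible q)
    (hA : A.Codeterministic) : ∃ v, support (A.future v) = {q} := by
  obtain ⟨l, hl, hτ⟩ := hq
  exact ⟨l.map Prod.fst, hA.support_future hl hτ⟩

theorem Trim.exists_behaviour_append_ne_zero_iff (htrim : A.Trim) (hbidet : A.Bideterministic) :
    ∃ u v : A.Q → List α, ∀ p q, A.behaviour (u p ++ v q) ≠ 0 ↔ p = q := by
  choose u hu using fun p ↦ (htrim p).1.exists_support_propagate_eq_singleton hbidet.deterministic
  choose v hv using fun q ↦ (htrim q).2.exists_support_future_eq_singleton hbidet.codeterministic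
  refine ⟨u, v, fun p q ↦ ?_⟩
  rw [behaviour_append, dotProduct_ne_zero_iff_of_support_left (hu p), ← mem_support, hv q,
    Set.mem_singleton_iff]

end WeightedAutomaton

theorem trim_bideterministic_minimal_of_isDomain_general
    {S : Type} [Semiring S] [IsRightCancelMulZero S] [StrongRankCondition S] {α : Type}
    (A : WeightedAutomaton S α) (htrim : A.Trim) (hbidet : A.Bideterministic) :
    A.Minimal := by
  intro B hB
  obtain ⟨u, v, huv⟩ := htrim.exists_behaviour_append_ne_zero_iff hbidet
  exact B.card_le_states_of_behaviour_append_ne_zero_iff (hB ▸ huv)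

/-- Every trim bideterministic weighted automaton over an integral domain is
minimal. -/
theorem trim_bideterministic_minimal_of_isDomain
    {R : Type} [CommRing R] [IsDomain R] {α : Type} [Fintype α] [Nonempty α]
    (A : WeightedAutomaton R α) (htrim : A.Trim) (hbidet : A.Bideterministic) :
    A.Minimal :=
  trim_bideterministic_minimal_of_isDomain_general A htrim hbidet
end

section
/- Let S be a semiring that is not zero-divisor free, i.e., there exist s, t ∈ S with s ≠ 0, t ≠ 0, and s·t = 0. Then for every alphabet Σ there exists a trim bideterministic weighted automaton over S and Σ that is not minimal. -/
/-!
Trimness sees only single weights, not their products. With `s * t = 0`, a path `p → q` with initial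
weight `s`, transition weight `1` and terminal weight `t` is therefore trim, although its only
successful runs have weight `s * 1 * t = 0`. Its behaviour is zero, which a single state realises.
(One state of weights `s` and `t` would do if compared with the automaton without states; two states
make the argument valid for nonempty state sets as well.)
-/

namespace WeightedAutomaton

variable {S : Type} [Semiring S] {α : Type}

section ZeroWeights

variable (S α) in
/-- The automaton on the state set `Q` all of whose weights are zero; it realises the zero series
with any prescribed number of states. -/
def zeroWeights (Q : Type) [Fintype Q] : WeightedAutomaton S α where
  Q := Q
  σ _ _ _ := 0
  ι _ := 0
  τ _ := 0

theorem behaviour_zeroWeights (Q : Type) [Fintype Q] : (zeroWeights S α Q).behaviour = 0 := by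
  funext w
  simp [behaviour, zeroWeights]

theorem Minimal.states_le_card_of_behaviour_eq_zero {A : WeightedAutomaton S α} (hA : A.Minimal)
    (hzero : A.behaviour = 0) (Q : Type) [Fintype Q] : A.states ≤ Fintype.card Q :=
  hA (zeroWeights S α Q) ((behaviour_zeroWeights Q).trans hzero.symm)

end ZeroWeights

section TwoStatePath

variable {a b c : S}

variable (α) in
/-- The two-state automaton that moves from its initial state, of weight `a`, to its terminal state,
of weight `c`, by a transition of weight `b` upon every letter. The initial state is `false` and the
terminal state is `true`. -/
def twoStatePath (a b c : S) : WeightedAutomaton S α where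
  Q := Bool
  σ p _ q := if p = false ∧ q = true then b else 0
  ι p := if p = false then a else 0
  τ p := if p = true then c else 0

theorem states_twoStatePath : (twoStatePath α a b c).states = 2 :=
  Fintype.card_bool

theorem bideterministic_twoStatePath : (twoStatePath α a b c).Bideterministic := by
  have initial_eq : ∀ p : Bool, (twoStatePath α a b c).ι p ≠ 0 → p = false :=
    fun _ hp => (ite_ne_right_iff.mp hp).1
  have terminal_eq : ∀ p : Bool, (twoStatePath α a b c).τ p ≠ 0 → p = true :=
    fun _ hp => (ite_ne_right_iff.mp hp).1
  have transition_eq : ∀ (p : Bool) (x : α) (q : Bool),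
      (twoStatePath α a b c).σ p x q ≠ 0 → p = false ∧ q = true :=
    fun _ _ _ h => (ite_ne_right_iff.mp h).1
  exact ⟨fun p q hp hq => (initial_eq p hp).trans (initial_eq q hq).symm,
    fun p q hp hq => (terminal_eq p hp).trans (terminal_eq q hq).symm,
    fun p x q q' h h' => (transition_eq p x q h).2.trans (transition_eq p x q' h').2.symm,
    fun p p' x q h h' => (transition_eq p x q h).1.trans (transition_eq p' x q h').1.symm⟩

theorem trim_twoStatePath [Nonempty α] (ha : a ≠ 0) (hb : b ≠ 0) (hc : c ≠ 0) :
    (twoStatePath α a b c).Trim := by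
  obtain ⟨x⟩ := ‹Nonempty α›
  have step_isPath : (twoStatePath α a b c).IsPath false [(x, true)] := ⟨hb, trivial⟩
  rintro (_ | _)
  · exact ⟨⟨false, [], ha, trivial, rfl⟩, ⟨[(x, true)], step_isPath, hc⟩⟩
  · exact ⟨⟨false, [(x, true)], ha, step_isPath, rfl⟩, ⟨[], trivial, hc⟩⟩

theorem behaviour_twoStatePath_eq_zero (habc : a * b * c = 0) :
    (twoStatePath α a b c).behaviour = 0 := by
  have behaviour_eq (w : List α) :
      (twoStatePath α a b c).behaviour w = a * (twoStatePath α a b c).future w false :=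
    (Fintype.sum_bool _).trans (by simp [twoStatePath])
  have future_cons (x : α) (w : List α) : (twoStatePath α a b c).future (x :: w) false =
      b * (twoStatePath α a b c).future w true :=
    (Fintype.sum_bool _).trans (by simp [twoStatePath])
  funext w
  rw [behaviour_eq]
  match w with
  | [] => simp [future, twoStatePath]
  | [x] =>
    rw [future_cons, ← mul_assoc]
    exact habc
  | x :: y :: w =>
    have future_true : (twoStatePath α a b c).future (y :: w) true = 0 := by
      simp [future, twoStatePath]
    rw [future_cons, future_true, mul_zero, mul_zero, Pi.zero_apply]

end TwoStatePath

end WeightedAutomaton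

open WeightedAutomaton in
theorem exists_trim_bideterministic_not_minimal_of_zeroDivisor_general
    {S : Type} [Semiring S] (s t : S) (hs : s ≠ 0) (ht : t ≠ 0) (hst : s * t = 0)
    (α : Type) [Nonempty α] :
    ∃ A : WeightedAutomaton S α, A.Trim ∧ A.Bideterministic ∧ ¬ A.Minimal := by
  have : Nontrivial S := nontrivial_of_ne s 0 hs
  refine ⟨twoStatePath α s 1 t, trim_twoStatePath hs one_ne_zero ht,
    bideterministic_twoStatePath, fun hmin => ?_⟩
  have hzero : (twoStatePath α s 1 t).behaviour = 0 :=
    behaviour_twoStatePath_eq_zero (by rw [mul_one, hst])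
  have two_le_one : 2 ≤ 1 := by
    simpa [states_twoStatePath] using hmin.states_le_card_of_behaviour_eq_zero hzero Unit
  exact absurd two_le_one (by decide)

/-- Over a semiring that is not zero-divisor free, there is a trim
bideterministic weighted automaton that is not minimal. -/
theorem exists_trim_bideterministic_not_minimal_of_zeroDivisor
    {S : Type} [Semiring S] (s t : S) (hs : s ≠ 0) (ht : t ≠ 0) (hst : s * t = 0)
    (α : Type) [Fintype α] [Nonempty α] :
    ∃ A : WeightedAutomaton S α, A.Trim ∧ A.Bideterministic ∧ ¬ A.Minimal :=
  exists_trim_bideterministic_not_minimal_of_zeroDivisor_general s t hs ht hst α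
end

section
/- Let S be a commutative semiring such that for every alphabet Σ and every bideterministic weighted automaton A over S and Σ, there exists a minimal weighted automaton over S with behaviour ‖A‖ that is bideterministic. Then the set Z(S) = {a ∈ S : there exists b ∈ S with b ≠ 0 and a·b = 0} of zero divisors of S is closed under addition; consequently, Z(S) is an ideal of S. -/
/-- The set of zero divisors of a commutative semiring `S`. -/
def zeroDivisorSet (S : Type) [CommSemiring S] : Set S :=
  {a : S | ∃ b : S, b ≠ 0 ∧ a * b = 0}

/-!
Suppose `a * c = 0` and `b * d = 0` with `c, d ≠ 0`, but `a + b` is not a zero divisor. Consider the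
bideterministic automaton with states `s` (initial and terminal), `p`, `q` and the transitions

  `s —u/d→ p`, `p —u/a→ s`, `p —x/a→ p`, `s —x/c→ q`, `q —x/b→ s`.

Identifying `p` with `q` does not change the behaviour: a spurious run enters with weight `c` and
continues with weight `a`, or enters with weight `d` and continues with weight `b`. So two states
suffice. But `a * d`, `a * (a * d)` and `b * c` are nonzero because `a + b` is not a zero divisor,
so the words `uu`, `uxu` and `xx` are in the support, while `u` and `x` are not. In a
bideterministic automaton with this support, `uxu` forces a loop upon `x` at the state reached by
`u`, whereas `x` leads from the state reached by `x` to the terminal state; so these two states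
differ. Neither of them is initial, hence there are at least three states.
-/

theorem mul_mem_zeroDivisorSet {S : Type} [CommSemiring S] (s : S) {a : S}
    (ha : a ∈ zeroDivisorSet S) : s * a ∈ zeroDivisorSet S := by
  obtain ⟨b, hb, hab⟩ := ha
  exact ⟨b, hb, by rw [mul_assoc, hab, mul_zero]⟩

theorem mul_ne_zero_of_add_notMem_zeroDivisorSet {S : Type} [CommSemiring S] {a b d : S}
    (hab : a + b ∉ zeroDivisorSet S) (hbd : b * d = 0) (hd : d ≠ 0) : a * d ≠ 0 :=
  fun had => hab ⟨d, hd, by rw [add_mul, had, hbd, add_zero]⟩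

namespace WeightedAutomaton

section Runs

variable {S : Type} [Semiring S] {α : Type} {A : WeightedAutomaton S α}

theorem exists_ι_ne_zero_of_behaviour_ne_zero {w : List α} (h : A.behaviour w ≠ 0) :
    ∃ q, A.ι q ≠ 0 ∧ A.future w q ≠ 0 := by
  obtain ⟨q, -, hq⟩ := Finset.exists_ne_zero_of_sum_ne_zero h
  exact ⟨q, left_ne_zero_of_mul hq, right_ne_zero_of_mul hq⟩

theorem exists_σ_ne_zero_of_future_cons_ne_zero {c : α} {w : List α} {p : A.Q}
    (h : A.future (c :: w) p ≠ 0) : ∃ q, A.σ p c q ≠ 0 ∧ A.future w q ≠ 0 := by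
  obtain ⟨q, -, hq⟩ := Finset.exists_ne_zero_of_sum_ne_zero h
  exact ⟨q, left_ne_zero_of_mul hq, right_ne_zero_of_mul hq⟩

namespace Bideterministic

theorem initial_unique (hA : A.Bideterministic) {p q : A.Q} (hp : A.ι p ≠ 0) (hq : A.ι q ≠ 0) :
    p = q :=
  hA.1 p q hp hq

theorem terminal_unique (hA : A.Bideterministic) {p q : A.Q} (hp : A.τ p ≠ 0) (hq : A.τ q ≠ 0) :
    p = q :=
  hA.2.1 p q hp hq

theorem target_unique (hA : A.Bideterministic) {p q q' : A.Q} {c : α} (h : A.σ p c q ≠ 0)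
    (h' : A.σ p c q' ≠ 0) : q = q' :=
  hA.2.2.1 p c q q' h h'

theorem source_unique (hA : A.Bideterministic) {p p' q : A.Q} {c : α} (h : A.σ p c q ≠ 0)
    (h' : A.σ p' c q ≠ 0) : p = p' :=
  hA.2.2.2 p p' c q h h'

theorem behaviour_eq (hA : A.Bideterministic) {q : A.Q} (hq : A.ι q ≠ 0) (w : List α) :
    A.behaviour w = A.ι q * A.future w q :=
  Fintype.sum_eq_single q fun r hr => by
    by_contra hne
    exact hr (hA.initial_unique (left_ne_zero_of_mul hne) hq)

theorem future_cons_eq (hA : A.Bideterministic) {p q : A.Q} {c : α} (hpq : A.σ p c q ≠ 0)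
    (w : List α) : A.future (c :: w) p = A.σ p c q * A.future w q :=
  Fintype.sum_eq_single q fun r hr => by
    by_contra hne
    exact hr (hA.target_unique (left_ne_zero_of_mul hne) hpq)

theorem σ_loop_ne_zero_of_behaviour_ne_zero (hA : A.Bideterministic) {i r t : A.Q} {c d e : α}
    (hi : A.ι i ≠ 0) (hir : A.σ i c r ≠ 0) (hrt : A.σ r e t ≠ 0) (ht : A.τ t ≠ 0)
    (h : A.behaviour [c, d, e] ≠ 0) : A.σ r d r ≠ 0 := by
  obtain ⟨i', hi', hfuture⟩ := exists_ι_ne_zero_of_behaviour_ne_zero h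
  obtain ⟨r₁, hir₁, hfuture₁⟩ := exists_σ_ne_zero_of_future_cons_ne_zero hfuture
  obtain ⟨r₂, hr₁r₂, hfuture₂⟩ := exists_σ_ne_zero_of_future_cons_ne_zero hfuture₁
  obtain ⟨t', hr₂t', ht'⟩ := exists_σ_ne_zero_of_future_cons_ne_zero hfuture₂
  obtain rfl := hA.initial_unique hi hi'
  obtain rfl := hA.terminal_unique ht ht'
  obtain rfl := hA.target_unique hir hir₁
  obtain rfl := hA.source_unique hrt hr₂t'
  exact hr₁r₂

end Bideterministic

end Runs

namespace Bideterministic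

variable {S : Type} [CommSemiring S] {α : Type} {A : WeightedAutomaton S α}

theorem exists_run_of_behaviour_pair_ne_zero (hA : A.Bideterministic) {c d : α}
    (hcd : A.behaviour [c, d] ≠ 0) (hc : A.behaviour [c] = 0) :
    ∃ i r t, A.ι i ≠ 0 ∧ A.σ i c r ≠ 0 ∧ A.σ r d t ≠ 0 ∧ A.τ t ≠ 0 ∧ r ≠ t := by
  obtain ⟨i, hi, hfuture⟩ := exists_ι_ne_zero_of_behaviour_ne_zero hcd
  obtain ⟨r, hir, hfuture₁⟩ := exists_σ_ne_zero_of_future_cons_ne_zero hfuture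
  obtain ⟨t, hrt, ht⟩ := exists_σ_ne_zero_of_future_cons_ne_zero hfuture₁
  refine ⟨i, r, t, hi, hir, hrt, ht, ?_⟩
  rintro rfl
  apply hcd
  calc A.behaviour [c, d] = A.ι i * (A.σ i c r * (A.σ r d r * A.future [] r)) := by
        rw [hA.behaviour_eq hi, hA.future_cons_eq hir, hA.future_cons_eq hrt]
    _ = A.σ r d r * (A.ι i * (A.σ i c r * A.future [] r)) := by ring
    _ = A.σ r d r * A.behaviour [c] := by rw [hA.behaviour_eq hi, hA.future_cons_eq hir]
    _ = 0 := by rw [hc, mul_zero]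

theorem three_le_states (hA : A.Bideterministic) {u x : α}
    (huu : A.behaviour [u, u] ≠ 0) (huxu : A.behaviour [u, x, u] ≠ 0)
    (hxx : A.behaviour [x, x] ≠ 0) (hu : A.behaviour [u] = 0) (hx : A.behaviour [x] = 0) :
    3 ≤ A.states := by
  obtain ⟨i, p, t, hi, hip, hpt, ht, hpt_ne⟩ := hA.exists_run_of_behaviour_pair_ne_zero huu hu
  obtain ⟨i', q, t', hi', hiq, hqt, ht', hqt_ne⟩ := hA.exists_run_of_behaviour_pair_ne_zero hxx hx
  obtain rfl := hA.initial_unique hi hi'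
  obtain rfl := hA.terminal_unique ht ht'
  have hpp : A.σ p x p ≠ 0 := hA.σ_loop_ne_zero_of_behaviour_ne_zero hi hip hpt ht huxu
  have hip_ne : i ≠ p := by
    rintro rfl
    exact hpt_ne (hA.target_unique hip hpt)
  have hiq_ne : i ≠ q := by
    rintro rfl
    exact hqt_ne (hA.target_unique hiq hqt)
  have hpq_ne : p ≠ q := by
    rintro rfl
    exact hpt_ne (hA.target_unique hpp hqt)
  exact Fintype.two_lt_card_iff.2 ⟨i, p, q, hip_ne, hiq_ne, hpq_ne⟩

end Bideterministic

section SplitAndMerged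

variable {S : Type} [CommSemiring S] {α : Type} [DecidableEq α]

/-- The bideterministic automaton with transitions `s —u/d→ p`, `p —u/a→ s`, `p —x/a→ p`,
`s —x/c→ q`, `q —x/b→ s`, whose minimal equivalents fail to be bideterministic in the main argument.
The states are encoded as `s = 0`, `p = 1`, `q = 2`; if `u = x`, the transitions upon `x` are
dropped. -/
abbrev splitAutomaton (u x : α) (a b c d : S) : WeightedAutomaton S α where
  Q := Fin 3
  σ i l j :=
    if l = u then !![0, d, 0; a, 0, 0; 0, 0, 0] i j
    else if l = x then !![0, 0, c; 0, a, 0; b, 0, 0] i j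
    else 0
  ι := ![1, 0, 0]
  τ := ![1, 0, 0]

/-- The quotient of `splitAutomaton` that identifies the states `p` and `q`; the states are `s = 0`
and `p = q = 1`. When `a * c = 0` and `b * d = 0` it has the same behaviour, although it need not
be bideterministic. -/
abbrev mergedAutomaton (u x : α) (a b c d : S) : WeightedAutomaton S α where
  Q := Fin 2
  σ i l j :=
    if l = u then !![0, d; a, 0] i j
    else if l = x then !![0, c; b, a] i j
    else 0
  ι := ![1, 0]
  τ := ![1, 0]

variable (u x : α) (a b c d : S)

theorem bideterministic_splitAutomaton : (splitAutomaton u x a b c d).Bideterministic := by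
  refine ⟨by simp [Fin.forall_fin_succ], by simp [Fin.forall_fin_succ], fun p l => ?_,
    fun p p' l => ?_⟩
  · dsimp only
    revert p
    split_ifs <;> simp [Fin.forall_fin_succ]
  · dsimp only
    revert p p'
    split_ifs <;> simp [Fin.forall_fin_succ]

variable {a b c d}

theorem future_mergedAutomaton (hac : a * c = 0) (hbd : b * d = 0) (w : List α) :
    (mergedAutomaton u x a b c d).future w 0 = (splitAutomaton u x a b c d).future w 0 ∧
    d * (mergedAutomaton u x a b c d).future w 1 = d * (splitAutomaton u x a b c d).future w 1 ∧
    c * (mergedAutomaton u x a b c d).future w 1 = c * (splitAutomaton u x a b c d).future w 2 := by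
  have hca (f : S) : c * (a * f) = 0 := by rw [← mul_assoc, mul_comm c, hac, zero_mul]
  have hdb (f : S) : d * (b * f) = 0 := by rw [← mul_assoc, mul_comm d, hbd, zero_mul]
  induction w with
  | nil => simp [future]
  | cons l w ih =>
    obtain ⟨hs, hp, hq⟩ := ih
    have hloop : d * (a * (mergedAutomaton u x a b c d).future w 1) =
        d * (a * (splitAutomaton u x a b c d).future w 1) := by
      rw [mul_left_comm, hp, mul_left_comm]
    simp only [future]
    split_ifs <;> simp [Fin.sum_univ_succ, mul_add, hca, hdb, hs, hp, hq, hloop]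

theorem behaviour_mergedAutomaton (hac : a * c = 0) (hbd : b * d = 0) :
    (mergedAutomaton u x a b c d).behaviour = (splitAutomaton u x a b c d).behaviour := by
  funext w
  simpa [behaviour, Fin.sum_univ_succ] using (future_mergedAutomaton u x hac hbd w).1

variable {u x}

theorem Bideterministic.three_le_states_of_behaviour_eq_splitAutomaton
    {B : WeightedAutomaton S α} (hB : B.Bideterministic) (hux : u ≠ x)
    (hBA : B.behaviour = (splitAutomaton u x a b c d).behaviour)
    (haad : a * (a * d) ≠ 0) (hbc : b * c ≠ 0) : 3 ≤ B.states := by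
  have huu : (splitAutomaton u x a b c d).behaviour [u, u] = a * d := by
    simp [behaviour, future, Fin.sum_univ_succ, mul_comm]
  have huxu : (splitAutomaton u x a b c d).behaviour [u, x, u] = a * (a * d) := by
    simp [behaviour, future, Fin.sum_univ_succ, hux.symm, mul_comm, mul_left_comm]
  have hxx : (splitAutomaton u x a b c d).behaviour [x, x] = b * c := by
    simp [behaviour, future, Fin.sum_univ_succ, hux.symm, mul_comm]
  have hu : (splitAutomaton u x a b c d).behaviour [u] = 0 := by
    simp [behaviour, future, Fin.sum_univ_succ]
  have hx : (splitAutomaton u x a b c d).behaviour [x] = 0 := by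
    simp [behaviour, future, Fin.sum_univ_succ, hux.symm]
  rw [← hBA] at huu huxu hxx hu hx
  exact hB.three_le_states (huu ▸ right_ne_zero_of_mul haad) (huxu ▸ haad) (hxx ▸ hbc) hu hx

end SplitAndMerged

end WeightedAutomaton

open WeightedAutomaton in
theorem zeroDivisorSet_add_closed_of_bideterministic_minimal_general
    {S : Type} [CommSemiring S] {α : Type} [Nontrivial α]
    (h : ∀ A : WeightedAutomaton S α, A.Bideterministic →
        ∃ B : WeightedAutomaton S α,
          B.behaviour = A.behaviour ∧ B.Minimal ∧ B.Bideterministic) :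
    (∀ a b : S, a ∈ zeroDivisorSet S → b ∈ zeroDivisorSet S →
        a + b ∈ zeroDivisorSet S) ∧
    (∀ s a : S, a ∈ zeroDivisorSet S → s * a ∈ zeroDivisorSet S) := by
  classical
  refine ⟨?_, fun s _ => mul_mem_zeroDivisorSet s⟩
  rintro a b ⟨c, hc, hac⟩ ⟨d, hd, hbd⟩
  by_contra hab
  have had : a * d ≠ 0 := mul_ne_zero_of_add_notMem_zeroDivisorSet hab hbd hd
  have haad : a * (a * d) ≠ 0 :=
    mul_ne_zero_of_add_notMem_zeroDivisorSet hab (by rw [mul_left_comm, hbd, mul_zero]) had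
  have hbc : b * c ≠ 0 :=
    mul_ne_zero_of_add_notMem_zeroDivisorSet (add_comm a b ▸ hab) hac hc
  obtain ⟨u, x, hux⟩ := exists_pair_ne α
  obtain ⟨B, hBA, hmin, hB⟩ :=
    h (splitAutomaton u x a b c d) (bideterministic_splitAutomaton u x a b c d)
  have hle : B.states ≤ 2 :=
    hmin (mergedAutomaton u x a b c d) ((behaviour_mergedAutomaton u x hac hbd).trans hBA.symm)
  have hge : 3 ≤ B.states :=
    hB.three_le_states_of_behaviour_eq_splitAutomaton hux hBA haad hbc
  omega

/-- If over a commutative semiring `S` every bideterministic weighted automaton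
admits an equivalent minimal automaton that is bideterministic, then the set of
zero divisors of `S` is closed under addition; together with its (obvious)
closedness under multiplication by arbitrary elements, this makes it an ideal
of `S`. -/
theorem zeroDivisorSet_add_closed_of_bideterministic_minimal
    {S : Type} [CommSemiring S]
    (h : ∀ (α : Type) (_ : Fintype α) (_ : Nonempty α)
        (A : WeightedAutomaton S α), A.Bideterministic →
        ∃ B : WeightedAutomaton S α,
          B.behaviour = A.behaviour ∧ B.Minimal ∧ B.Bideterministic) :
    (∀ a b : S, a ∈ zeroDivisorSet S → b ∈ zeroDivisorSet S →
        a + b ∈ zeroDivisorSet S) ∧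
    (∀ s a : S, a ∈ zeroDivisorSet S → s * a ∈ zeroDivisorSet S) :=
  zeroDivisorSet_add_closed_of_bideterministic_minimal_general (h Bool inferInstance inferInstance)
end

section
/- Let p be a prime, let k, n be positive integers, and let v₁, …, v_{n−1} be vectors in (ℤ/p^kℤ)ⁿ. Then there exists an index j ∈ {1, …, n} such that there are no a₁, …, a_{n−1} ∈ ℤ/p^kℤ and b ∈ ℤ/p^kℤ with b ≠ 0 satisfying a₁·v₁ + ⋯ + a_{n−1}·v_{n−1} = b·e_j, where e_j ∈ (ℤ/p^kℤ)ⁿ is the vector with j-th entry 1 and all other entries 0. Equivalently, some nonzero multiple of no standard basis vector other than e_j is relevant: no nonzero scalar multiple of e_j lies in the submodule of (ℤ/p^kℤ)ⁿ generated by v₁, …, v_{n−1}. -/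
/-!
Divisibility in `ℤ/p^k` is total, since it is a quotient of the valuation ring `ℤ_[p]`. In a row of
a matrix over such a ring some entry divides all the others, so Gaussian elimination works even in
the presence of zero divisors: a homogeneous system with fewer equations than unknowns has a
solution `w` with some coordinate `w j` equal to `1`. Taking the `v i` as equations, `w` is
orthogonal to their span, and pairing `w` with an element `b • e_j` of the span gives `b = 0`.
-/

open Matrix

theorem exists_forall_apply_dvd {M κ : Type*} [Monoid M] [PreValuationRing M]
    [Finite κ] [Nonempty κ] (a : κ → M) : ∃ j₀, ∀ j, a j₀ ∣ a j := by
  have dvd_directed : Directed (fun x y ↦ y ∣ x) a := fun i j ↦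
    (ValuationRing.dvd_total (a i) (a j)).elim (fun h ↦ ⟨i, dvd_rfl, h⟩) fun h ↦ ⟨j, h, dvd_rfl⟩
  have : IsTrans M fun x y ↦ y ∣ x := ⟨fun _ _ _ hxy hyz ↦ hyz.trans hxy⟩
  exact dvd_directed.finite_le id

section TotalDivisibility

variable {R : Type*} [CommRing R] [PreValuationRing R]

theorem exists_vecMul_eq_zero_and_submatrix_eq_one {κ : Type*} [Fintype κ] [DecidableEq κ]
    [Nonempty κ] (a : κ → R) :
    ∃ (j₀ : κ) (U : Matrix κ {j // j ≠ j₀} R),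
      a ᵥ* U = 0 ∧ U.submatrix (Subtype.val : {j // j ≠ j₀} → κ) id = 1 := by
  obtain ⟨j₀, hj₀⟩ := exists_forall_apply_dvd a
  choose q hq using hj₀
  let U : Matrix κ {j // j ≠ j₀} R :=
    (Matrix.of fun j : {j // j ≠ j₀} ↦ Pi.single j.1 1 - Pi.single j₀ (q j))ᵀ
  refine ⟨j₀, U, ?_, ?_⟩
  · ext j
    calc
      a ⬝ᵥ (Pi.single j.1 1 - Pi.single j₀ (q j)) = a j - a j₀ * q j := by
        rw [dotProduct_sub, dotProduct_single_one, dotProduct_single]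
      _ = 0 := sub_eq_zero.mpr (hq j)
  · ext i j
    simp [U, Matrix.one_apply, Pi.single_apply, Subtype.ext_iff, i.2]

theorem exists_apply_eq_one_and_forall_mem_mulVec_eq_zero {ι κ : Type*} [Fintype κ]
    (A : Matrix ι κ R) (s : Finset ι) (hs : s.card < Fintype.card κ) :
    ∃ (w : κ → R) (j : κ), w j = 1 ∧ ∀ i ∈ s, (A *ᵥ w) i = 0 := by
  classical
  induction s using Finset.induction_on generalizing κ with
  | empty =>
    obtain ⟨j⟩ := Fintype.card_pos_iff.mp hs
    exact ⟨Pi.single j 1, j, by simp⟩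
  | insert i s hi ih =>
    rw [Finset.card_insert_of_notMem hi] at hs
    have : Nonempty κ := Fintype.card_pos_iff.mp (by omega)
    obtain ⟨j₀, U, hAU, hU⟩ := exists_vecMul_eq_zero_and_submatrix_eq_one (A i)
    obtain ⟨w, j, hwj, hw⟩ := ih (A * U) (by simpa using Nat.lt_sub_of_add_lt hs)
    refine ⟨U *ᵥ w, j, ?_, Finset.forall_mem_insert .. |>.mpr ⟨?_, fun l hl ↦ ?_⟩⟩
    · calc
        (U *ᵥ w) j = (U.submatrix Subtype.val id *ᵥ w) j := rfl
        _ = 1 := by rw [hU, one_mulVec, hwj]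
    · calc
        A i ⬝ᵥ U *ᵥ w = A i ᵥ* U ⬝ᵥ w := dotProduct_mulVec ..
        _ = 0 := by rw [hAU, zero_dotProduct]
    · rw [mulVec_mulVec, hw l hl]

theorem exists_apply_eq_one_and_mulVec_eq_zero {ι κ : Type*} [Fintype ι] [Fintype κ]
    (A : Matrix ι κ R) (hcard : Fintype.card ι < Fintype.card κ) :
    ∃ (w : κ → R) (j : κ), w j = 1 ∧ A *ᵥ w = 0 := by
  obtain ⟨w, j, hwj, hw⟩ := exists_apply_eq_one_and_forall_mem_mulVec_eq_zero A .univ hcard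
  exact ⟨w, j, hwj, funext fun i ↦ hw i (Finset.mem_univ i)⟩

theorem exists_index_no_nonzero_multiple_of_single_in_span_general {ι κ : Type*} [Fintype ι]
    [Fintype κ] [DecidableEq κ] (hcard : Fintype.card ι < Fintype.card κ) (v : ι → κ → R) :
    ∃ j : κ, ¬ ∃ (a : ι → R) (b : R), b ≠ 0 ∧
      ∑ i, a i • v i = b • (Pi.single j 1 : κ → R) := by
  obtain ⟨w, j, hwj, hw⟩ := exists_apply_eq_one_and_mulVec_eq_zero (Matrix.of v) hcard
  refine ⟨j, fun ⟨a, b, hb, hab⟩ ↦ hb ?_⟩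
  calc
    b = (b • (Pi.single j 1 : κ → R)) ⬝ᵥ w := by
      rw [smul_dotProduct, single_one_dotProduct, hwj, smul_eq_mul, mul_one]
    _ = (∑ i, a i • v i) ⬝ᵥ w := by rw [hab]
    _ = (a ᵥ* Matrix.of v) ⬝ᵥ w := by rw [vecMul_eq_sum]; rfl
    _ = a ⬝ᵥ (Matrix.of v *ᵥ w) := (dotProduct_mulVec ..).symm
    _ = 0 := by rw [hw, dotProduct_zero]

end TotalDivisibility

instance preValuationRing_zmod_prime_pow (p k : ℕ) [Fact p.Prime] :
    PreValuationRing (ZMod (p ^ k)) :=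
  Function.Surjective.preValuationRing (PadicInt.toZModPow (p := p) k : ℤ_[p] →ₙ* ZMod (p ^ k))
    (ZMod.ringHom_surjective (PadicInt.toZModPow k))

/-- Given `n − 1` vectors `v₁, …, v_{n−1}` in `(ZMod p^k)ⁿ` (`p` prime,
`k, n ≥ 1`), there is an index `j` such that no nonzero scalar multiple of the
standard basis vector `e_j` is a linear combination of `v₁, …, v_{n−1}`. -/
theorem exists_index_no_nonzero_multiple_of_single_in_span
    (p k n : ℕ) (hp : p.Prime) (hk : 0 < k) (hn : 0 < n)
    (v : Fin (n - 1) → (Fin n → ZMod (p ^ k))) :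
    ∃ j : Fin n,
      ¬ ∃ (a : Fin (n - 1) → ZMod (p ^ k)) (b : ZMod (p ^ k)), b ≠ 0 ∧
        ∑ i : Fin (n - 1), a i • v i =
          b • (Pi.single j 1 : Fin n → ZMod (p ^ k)) := by
  have : Fact p.Prime := ⟨hp⟩
  exact exists_index_no_nonzero_multiple_of_single_in_span_general (by simpa using hn) v
end
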